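/- Quantitative distortion obstruction for nested sets (Proposition on distortions): let n ≥ 2 and let E, E₁, E₂ ⊂ ℝⁿ be sets of positive finite measure with E₁ ∪ E₂ ⊂ E, E₁ ∩ E₂ = ∅, and |E₁| ≥ |E₂|. Then there is a constant C_n > 0 depending only on n such that (|E| D(E)^{n/(n−1)} + |E₁| D(E₁)^{n/(n−1)} + |E₂| D(E₂)^{n/(n−1)}) / (|E| + |E₁ ∪ E₂|) ≥ C_n (|E₂|/(|E₁| + |E₂|))^{n/(n−1)} · [ ((|E₁|^{1/n} + |E₂|^{1/n})ⁿ − |E|) / ((|E₁|^{1/n} + |E₂|^{1/n})ⁿ − |E₁ ∪ E₂|) ]^{n(n+1)/(2(n−1))}, where the last bracket is interpreted as the estimate being trivial (right-hand side nonpositive) when |E| ≥ (|E₁|^{1/n} + |E₂|^{1/n})ⁿ. -/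

import Mathlib

open MeasureTheory Metric Set

/-- The Fraenkel asymmetry of a measurable set `E ⊆ ℝⁿ`. -/
noncomputable def fraenkelAsymmetry {n : ℕ} (E : Set (EuclideanSpace ℝ (Fin n))) : ℝ :=
  sInf {t : ℝ | ∃ (x : EuclideanSpace ℝ (Fin n)) (r : ℝ),
    volume (ball x r) = volume E ∧
    t = (volume (symmDiff E (ball x r))).toReal / (volume E).toReal}


namespace DistObs

noncomputable def ellMap {n : ℕ} (u : EuclideanSpace ℝ (Fin n)) (h ρ : ℝ) :
    EuclideanSpace ℝ (Fin n) →ₗ[ℝ] EuclideanSpace ℝ (Fin n) :=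
  ρ • LinearMap.transvection (((h - ρ) / ρ) • (innerₛₗ ℝ u)) u

lemma ellMap_apply {n : ℕ} (u : EuclideanSpace ℝ (Fin n)) (h ρ : ℝ) (hρ : 0 < ρ)
    (w : EuclideanSpace ℝ (Fin n)) :
    ellMap u h ρ w = ρ • w + ((h - ρ) * inner ℝ u w) • u := by
  simp only [ellMap, LinearMap.smul_apply, LinearMap.transvection.apply, innerₛₗ_apply_apply,
    smul_eq_mul, smul_add, smul_smul]
  congr 2
  field_simp

lemma ellMap_det {n : ℕ} (hn : 2 ≤ n) (u : EuclideanSpace ℝ (Fin n)) (hu : ‖u‖ = 1)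
    (h ρ : ℝ) (hρ : 0 < ρ) :
    LinearMap.det (ellMap u h ρ) = h * ρ ^ (n - 1) := by
  obtain ⟨m, rfl⟩ : ∃ m, n = m + 1 := ⟨n - 1, by omega⟩
  rw [ellMap, LinearMap.det_smul, LinearMap.transvection.det]
  simp only [finrank_euclideanSpace, Fintype.card_fin, LinearMap.smul_apply, innerₛₗ_apply_apply,
    real_inner_self_eq_norm_sq, hu, smul_eq_mul, Nat.add_sub_cancel]
  field_simp
  ring

/-- An ellipsoid. -/
def ell {n : ℕ} (m u : EuclideanSpace ℝ (Fin n)) (h ρ : ℝ) : Set (EuclideanSpace ℝ (Fin n)) :=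
  (fun z => m + z) '' (ellMap u h ρ '' ball 0 1)

lemma ell_vol {n : ℕ} (hn : 2 ≤ n) (m u : EuclideanSpace ℝ (Fin n)) (hu : ‖u‖ = 1)
    (h ρ : ℝ) (hh : 0 < h) (hρ : 0 < ρ) :
    volume (ell m u h ρ) =
      ENNReal.ofReal (h * ρ ^ (n - 1)) * volume (ball (0 : EuclideanSpace ℝ (Fin n)) 1) := by
  rw [ell, image_add_left, measure_preimage_add, Measure.addHaar_image_linearMap, ellMap_det hn u hu h ρ hρ,
    abs_of_pos (by positivity)]

lemma ell_mem {n : ℕ} {m u y : EuclideanSpace ℝ (Fin n)} (hu : ‖u‖ = 1)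
    {h ρ : ℝ} (hρ : 0 < ρ) (hy : y ∈ ell m u h ρ) (c : EuclideanSpace ℝ (Fin n)) (q : ℝ)
    (hm : m = c + q • u) :
    ∃ s : ℝ, -1 < s ∧ s < 1 ∧ inner ℝ u (y - c) = q + h * s ∧
      ‖y - c‖ ^ 2 < (q + h * s) ^ 2 + ρ ^ 2 * (1 - s ^ 2) := by
  obtain ⟨_, ⟨w, hw, rfl⟩, rfl⟩ := hy
  rw [mem_ball_zero_iff] at hw
  have huu : inner ℝ u u = (1 : ℝ) := by rw [real_inner_self_eq_norm_sq, hu]; norm_num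
  have hs := abs_real_inner_le_norm u w
  rw [hu, one_mul] at hs
  have hs' := abs_lt.1 (lt_of_le_of_lt hs hw)
  refine ⟨inner ℝ u w, hs'.1, hs'.2, ?_, ?_⟩
  · simp only [hm, ellMap_apply u h ρ hρ]
    rw [show c + q • u + (ρ • w + ((h - ρ) * inner ℝ u w) • u) - c
      = q • u + (ρ • w + ((h - ρ) * inner ℝ u w) • u) by abel]
    simp only [inner_add_right, inner_smul_right, huu]
    ring
  · simp only [hm, ellMap_apply u h ρ hρ]
    rw [show c + q • u + (ρ • w + ((h - ρ) * inner ℝ u w) • u) - c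
      = q • u + (ρ • w + ((h - ρ) * inner ℝ u w) • u) by abel]
    rw [← real_inner_self_eq_norm_sq]
    simp only [inner_add_right, inner_smul_right, inner_add_left, inner_smul_left, huu,
      real_inner_comm u w, real_inner_self_eq_norm_sq, RCLike.conj_to_real]
    have h1 : ‖w‖ ^ 2 < 1 := by nlinarith [norm_nonneg w]
    have h2 : ρ ^ 2 * ‖w‖ ^ 2 < ρ ^ 2 * 1 := mul_lt_mul_of_pos_left h1 (by positivity)
    nlinarith

lemma ell_sub_ball {n : ℕ} {m u c : EuclideanSpace ℝ (Fin n)} (hu : ‖u‖ = 1)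
    {d r ρ : ℝ} (hρ : 0 < ρ) (hd : 0 < d) (hdr : d ≤ 2 * r) (hρ2 : 2 * ρ ^ 2 ≤ r * d)
    (hm : m = c + (r - d / 2) • u) : ell m u (d / 2) ρ ⊆ ball c r := by
  intro y hy
  obtain ⟨s, hs1, hs2, -, h⟩ := ell_mem hu hρ hy c _ hm
  rw [mem_ball_iff_norm]
  have hr : 0 < r := by linarith
  refine lt_of_pow_lt_pow_left₀ 2 hr.le (h.trans_le ?_)
  have e : r ^ 2 - ((r - d / 2 + d / 2 * s) ^ 2 + ρ ^ 2 * (1 - s ^ 2))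
      = (1 - s) * ((1 + s) / 2 * (r * d - 2 * ρ ^ 2) + (1 - s) / 2 * (d * (2 * r - d)/2)) := by ring
  have : 0 ≤ (1 - s) * ((1 + s) / 2 * (r * d - 2 * ρ ^ 2) + (1 - s) / 2 * (d * (2 * r - d)/2)) := by
    apply mul_nonneg (by linarith)
    apply add_nonneg
    · exact mul_nonneg (by linarith) (by linarith)
    · exact mul_nonneg (by linarith) (div_nonneg (mul_nonneg hd.le (by linarith)) (by norm_num))
  linarith

lemma ell_neg {n : ℕ} (m u : EuclideanSpace ℝ (Fin n)) (h ρ : ℝ) (hρ : 0 < ρ) :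
    ell m (-u) h ρ = ell m u h ρ := by
  have : ellMap (-u) h ρ = ellMap u h ρ := by
    ext1 w
    simp [ellMap_apply _ _ _ hρ]
  simp [ell, this]

/-- cap -/
lemma cap_vol {n : ℕ} (hn : 2 ≤ n) (x c : EuclideanSpace ℝ (Fin n)) {R r d ρ : ℝ} (hρ : 0 < ρ)
    (hd : 0 < d) (hdr : d ≤ 2 * r) (hρ2 : 2 * ρ ^ 2 ≤ r * d) (hrR : r ≤ R)
    (hdep : d ≤ ‖c - x‖ + r - R) :
    ENNReal.ofReal (d / 2 * ρ ^ (n - 1)) * volume (ball (0 : EuclideanSpace ℝ (Fin n)) 1) ≤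
      volume (ball c r \ ball x R) := by
  have hl : 0 < ‖c - x‖ := by linarith
  set u := (‖c - x‖)⁻¹ • (c - x) with hu'
  have hu : ‖u‖ = 1 := by rw [hu', norm_smul, norm_inv, norm_norm]; field_simp
  have hux : ‖c - x‖ • u = c - x := by rw [hu', smul_smul, mul_inv_cancel₀ hl.ne', one_smul]
  rw [← ell_vol hn (c + (r - d / 2) • u) u hu (d / 2) ρ (by linarith) hρ]
  apply measure_mono
  intro y hy
  refine ⟨ell_sub_ball hu hρ hd hdr hρ2 rfl hy, ?_⟩
  obtain ⟨s, hs1, hs2, h, -⟩ := ell_mem hu hρ hy x (‖c - x‖ + (r - d / 2)) (by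
    rw [add_smul, hux]; abel)
  have h3 := real_inner_le_norm u (y - x)
  rw [hu, one_mul, h] at h3
  rw [mem_ball_iff_norm, not_lt]
  nlinarith

lemma lens_vol {n : ℕ} (hn : 2 ≤ n) (c₁ c₂ : EuclideanSpace ℝ (Fin n)) {r₁ r₂ d ρ : ℝ} (hρ : 0 < ρ)
    (hd : 0 < d) (hdr : d ≤ 2 * r₂) (hρ2 : 2 * ρ ^ 2 ≤ r₂ * d) (hr : r₂ ≤ r₁)
    (hdep : d ≤ r₁ + r₂ - ‖c₁ - c₂‖) :
    ENNReal.ofReal (d / 2 * ρ ^ (n - 1)) * volume (ball (0 : EuclideanSpace ℝ (Fin n)) 1) ≤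
      volume (ball c₁ r₁ ∩ ball c₂ r₂) := by
  have key : ∀ D : ℝ, d ≤ D → D ≤ 2 * r₂ → ∀ (m u : EuclideanSpace ℝ (Fin n)), ‖u‖ = 1 →
      ENNReal.ofReal (d / 2 * ρ ^ (n - 1)) * volume (ball (0 : EuclideanSpace ℝ (Fin n)) 1) ≤
      volume (ell m u (D / 2) ρ) := by
    intro D h1 h2 m u hu
    rw [ell_vol hn _ u hu (D / 2) ρ (by linarith) hρ]
    gcongr
  have hr2 : 0 < r₂ := by linarith
  by_cases hD : 2 * r₂ ≤ r₁ + r₂ - ‖c₁ - c₂‖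
  · obtain ⟨u, hu⟩ : ∃ u : EuclideanSpace ℝ (Fin n), ‖u‖ = 1 :=
      ⟨EuclideanSpace.single ⟨0, by omega⟩ 1, by simp⟩
    refine (key (2 * r₂) hdr le_rfl (c₂ + (r₂ - (2 * r₂) / 2) • u) u hu).trans (measure_mono ?_)
    have h1 := ell_sub_ball (c := c₂) (d := 2 * r₂) (r := r₂) hu hρ (by linarith) le_rfl
      (by nlinarith) rfl
    refine subset_inter (h1.trans (ball_subset_ball' ?_)) h1
    rw [dist_comm, dist_eq_norm]; linarith
  · push Not at hD
    have hl : 0 < ‖c₁ - c₂‖ := by linarith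
    set u := (‖c₁ - c₂‖)⁻¹ • (c₁ - c₂) with hu'
    have hu : ‖u‖ = 1 := by rw [hu', norm_smul, norm_inv, norm_norm]; field_simp
    have hux : ‖c₁ - c₂‖ • u = c₁ - c₂ := by rw [hu', smul_smul, mul_inv_cancel₀ hl.ne', one_smul]
    set D := r₁ + r₂ - ‖c₁ - c₂‖ with hDD
    refine (key D hdep hD.le (c₂ + (r₂ - D / 2) • u) u hu).trans (measure_mono ?_)
    refine subset_inter ?_ (ell_sub_ball hu hρ (by linarith) hD.le (by nlinarith) rfl)
    rw [← ell_neg _ _ _ _ hρ]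
    refine ell_sub_ball (by rwa [norm_neg]) hρ (by linarith) (by linarith) (by nlinarith) ?_
    have : c₁ = c₂ + ‖c₁ - c₂‖ • u := by rw [hux]; abel
    have h4 : ‖c₁ - c₂‖ = r₁ + r₂ - D := by rw [hDD]; ring
    rw [h4] at this
    rw [this]
    module


/-- unit ball volume -/
noncomputable def om (n : ℕ) : ℝ := (volume (ball (0 : EuclideanSpace ℝ (Fin n)) 1)).toReal

lemma om_pos (n : ℕ) : 0 < om n :=
  ENNReal.toReal_pos (measure_ball_pos _ _ one_pos).ne' measure_ball_lt_top.ne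

lemma vol_ball {n : ℕ} (x : EuclideanSpace ℝ (Fin n)) {r : ℝ} (hr : 0 < r) :
    (volume (ball x r)).toReal = r ^ n * om n := by
  rw [Measure.addHaar_ball_of_pos _ _ hr, ENNReal.toReal_mul,
    ENNReal.toReal_ofReal (by positivity), om]
  simp

lemma asym_nonneg {n : ℕ} (E : Set (EuclideanSpace ℝ (Fin n))) : 0 ≤ fraenkelAsymmetry E := by
  apply Real.sInf_nonneg
  rintro t ⟨x, r, -, rfl⟩
  positivity

lemma pick {n : ℕ} (hn : 2 ≤ n) (E : Set (EuclideanSpace ℝ (Fin n))) (h0 : 0 < volume E)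
    (h1 : volume E < ⊤) :
    ∃ r : ℝ, 0 < r ∧ (volume E).toReal = r ^ n * om n ∧ ∀ ε > 0, ∃ x,
      volume (ball x r) = volume E ∧
      (volume (symmDiff E (ball x r))).toReal < (volume E).toReal * fraenkelAsymmetry E + ε := by
  have hv : 0 < (volume E).toReal := ENNReal.toReal_pos h0.ne' h1.ne
  have ho := om_pos n
  have hn0 : n ≠ 0 := by omega
  set r := ((volume E).toReal / om n) ^ ((n : ℝ)⁻¹) with hr
  have hrp : 0 < r := by positivity
  have hrn : r ^ n = (volume E).toReal / om n := Real.rpow_inv_natCast_pow (by positivity) hn0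
  have hvr : (volume E).toReal = r ^ n * om n := by rw [hrn]; field_simp
  refine ⟨r, hrp, hvr, fun ε hε => ?_⟩
  have hne : {t : ℝ | ∃ (x : EuclideanSpace ℝ (Fin n)) (r : ℝ),
    volume (ball x r) = volume E ∧
    t = (volume (symmDiff E (ball x r))).toReal / (volume E).toReal}.Nonempty := by
    refine ⟨_, 0, r, ?_, rfl⟩
    rw [← ENNReal.toReal_eq_toReal_iff' measure_ball_lt_top.ne h1.ne, vol_ball _ hrp, hvr]
  obtain ⟨t, ⟨x, r', hb, rfl⟩, ht⟩ := exists_lt_of_csInf_lt hne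
    (lt_add_of_pos_right (fraenkelAsymmetry E) (div_pos hε hv) :
      sInf _ < fraenkelAsymmetry E + ε / (volume E).toReal)
  have hr' : 0 < r' := by
    by_contra h
    rw [ball_eq_empty.2 (not_lt.1 h), measure_empty] at hb
    exact h0.ne hb
  have : r' = r := by
    have h2 : r' ^ n * om n = r ^ n * om n := by rw [← vol_ball x hr', hb, hvr]
    exact (pow_left_inj₀ hr'.le hrp.le hn0).1 (mul_right_cancel₀ ho.ne' h2)
  subst this
  refine ⟨x, hb, ?_⟩
  rw [div_lt_iff₀ hv] at ht
  calc _ < _ := ht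
    _ = _ := by field_simp

lemma three_balls {n : ℕ} (hn : 2 ≤ n) (E E₁ E₂ : Set (EuclideanSpace ℝ (Fin n)))
    (hE : volume E < ⊤) (hE₁ : volume E₁ < ⊤) (hE₂ : volume E₂ < ⊤)
    (hsub : E₁ ∪ E₂ ⊆ E) (hdisj : E₁ ∩ E₂ = ∅)
    (x x₁ x₂ : EuclideanSpace ℝ (Fin n)) {R r₁ r₂ : ℝ} (h2 : 0 < r₂) (h21 : r₂ ≤ r₁) (h1 : r₁ ≤ R)
    (hR : R < r₁ + r₂) :
    (r₁ + r₂ - R) / 3 * √(r₂ * (r₁ + r₂ - R) / 3) ^ (n - 1) * om n ≤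
      (volume (symmDiff E (ball x R))).toReal + (volume (symmDiff E₁ (ball x₁ r₁))).toReal +
      (volume (symmDiff E₂ (ball x₂ r₂))).toReal := by
  obtain ⟨t, ht⟩ : ∃ t, t = r₁ + r₂ - R := ⟨_, rfl⟩
  rw [← ht]
  have ht0 : 0 < t := by linarith
  set ρ := √(r₂ * t / 3) with hρ'
  have hρ : 0 < ρ := Real.sqrt_pos.2 (by positivity)
  have hρ2 : ρ ^ 2 = r₂ * t / 3 := Real.sq_sqrt (by positivity)
  have hfin : ∀ (F : Set (EuclideanSpace ℝ (Fin n))) (y : EuclideanSpace ℝ (Fin n)) (r : ℝ),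
      volume F < ⊤ → volume (symmDiff F (ball y r)) ≠ ⊤ := by
    intro F y r hF
    refine ((measure_mono (symmDiff_le_sup)).trans_lt
      ((measure_union_le _ _).trans_lt (ENNReal.add_lt_top.2 ⟨hF, measure_ball_lt_top⟩))).ne
  have f0 := hfin E x R hE
  have f1 := hfin E₁ x₁ r₁ hE₁
  have f2 := hfin E₂ x₂ r₂ hE₂
  have main : ENNReal.ofReal ((2 * t / 3) / 2 * ρ ^ (n - 1)) *
      volume (ball (0 : EuclideanSpace ℝ (Fin n)) 1) ≤
      volume (symmDiff E (ball x R)) + volume (symmDiff E₁ (ball x₁ r₁)) +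
      volume (symmDiff E₂ (ball x₂ r₂)) := by
    have tri : ‖x₁ - x₂‖ ≤ ‖x₁ - x‖ + ‖x₂ - x‖ := by
      rw [← norm_neg (x₂ - x), neg_sub]
      exact norm_sub_le_norm_sub_add_norm_sub _ _ _
    have hmono : volume (symmDiff E (ball x R) ∪ symmDiff E₁ (ball x₁ r₁) ∪
        symmDiff E₂ (ball x₂ r₂)) ≤ volume (symmDiff E (ball x R)) +
        volume (symmDiff E₁ (ball x₁ r₁)) + volume (symmDiff E₂ (ball x₂ r₂)) :=
      (measure_union_le _ _).trans (by gcongr; exact measure_union_le _ _)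
    refine le_trans ?_ hmono
    by_cases c1 : 2 * t / 3 ≤ ‖x₁ - x‖ + r₁ - R
    · refine (cap_vol hn x x₁ hρ (by linarith) (by linarith) (by nlinarith) h1 c1).trans
        (measure_mono ?_)
      rintro y ⟨hy1, hy2⟩
      have := @hsub y
      simp only [mem_union, mem_symmDiff] at this ⊢
      tauto
    by_cases c2 : 2 * t / 3 ≤ ‖x₂ - x‖ + r₂ - R
    · refine (cap_vol hn x x₂ hρ (by linarith) (by linarith) (by nlinarith) (h21.trans h1) c2).trans
        (measure_mono ?_)
      rintro y ⟨hy1, hy2⟩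
      have := @hsub y
      simp only [mem_union, mem_symmDiff] at this ⊢
      tauto
    push Not at c1 c2
    refine (lens_vol hn x₁ x₂ hρ (by linarith) (by linarith) (by nlinarith) h21
      (by linarith)).trans (measure_mono ?_)
    rintro y ⟨hy1, hy2⟩
    have : ¬ (y ∈ E₁ ∧ y ∈ E₂) := fun h => by
      have : y ∈ E₁ ∩ E₂ := h
      rw [hdisj] at this
      exact this
    simp only [mem_union, mem_symmDiff]
    by_cases hz : y ∈ E₁
    · exact Or.inr (Or.inr ⟨hy2, fun h => this ⟨hz, h⟩⟩)
    · exact Or.inl (Or.inr (Or.inr ⟨hy1, hz⟩))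
  have := ENNReal.toReal_mono (by finiteness) main
  rw [ENNReal.toReal_mul, ENNReal.toReal_ofReal (by positivity), ENNReal.toReal_add (by finiteness)
    (by finiteness), ENNReal.toReal_add (by finiteness) (by finiteness)] at this
  refine le_trans (le_of_eq ?_) this
  rw [om]; ring

/-- Jensen -/
lemma jensen3 {v a b x y z p : ℝ} (hv : 0 < v) (ha : 0 < a) (hb : 0 < b) (hx : 0 ≤ x) (hy : 0 ≤ y)
    (hz : 0 ≤ z) (hp : 1 ≤ p) :
    ((v * x + a * y + b * z) / (v + a + b)) ^ p ≤ (v * x ^ p + a * y ^ p + b * z ^ p) / (v + a + b) := by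
  have h := Real.rpow_arith_mean_le_arith_mean_rpow Finset.univ
    ![v / (v + a + b), a / (v + a + b), b / (v + a + b)] ![x, y, z]
    (by intro i _; fin_cases i <;> simp <;> positivity)
    (by simp [Fin.sum_univ_succ]; field_simp; ring)
    (by intro i _; fin_cases i <;> simp <;> assumption) hp
  simp [Fin.sum_univ_succ] at h
  convert h using 1
  · congr 1; field_simp; ring
  · field_simp; ring

lemma lower_pow {n : ℕ} (hn : 2 ≤ n) {r s : ℝ} (hr : 0 < r) (hs : 0 < s) :
    r ^ (n - 1) * s ≤ (r + s) ^ n - r ^ n - s ^ n := by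
  obtain ⟨m, rfl⟩ : ∃ m, n = m + 2 := ⟨n - 2, by omega⟩
  have := pow_add_pow_le hr.le hs.le (n := m + 1) (by omega)
  have h2 := mul_le_mul_of_nonneg_left this (by positivity : 0 ≤ r + s)
  rw [show m + 2 - 1 = m + 1 by omega, pow_succ (r + s) (m + 1), pow_succ r (m + 1), pow_succ s (m + 1)]
  have : 0 ≤ r * s ^ (m + 1) := by positivity
  nlinarith

lemma upper_pow {n : ℕ} {L t : ℝ} (hL : 0 ≤ L) (ht : t ≤ L) :
    L ^ n - (L - t) ^ n ≤ n * L ^ (n - 1) * t := by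
  have := pow_add_mul_le_add_pow (a := L) (b := -t) hL (by linarith) n
  rw [← sub_eq_add_neg] at this
  linarith


lemma final_num {n : ℕ} (hn : 2 ≤ n) {R r₁ r₂ w v a b S X δ : ℝ} (hw : 0 < w) (h2 : 0 < r₂)
    (h21 : r₂ ≤ r₁) (h1 : r₁ ≤ R) (hR : R < r₁ + r₂) (hv : v = R ^ n * w) (ha : a = r₁ ^ n * w)
    (hb : b = r₂ ^ n * w) (hS : S = (r₁ + r₂) ^ n * w) (hδ : δ = (S - v) / (S - (a + b)))
    (hX : (r₁ + r₂ - R) / 3 * √(r₂ * (r₁ + r₂ - R) / 3) ^ (n - 1) * w ≤ X) :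
    ((2 : ℝ) ^ n + 1)⁻¹ * ((3 * n * 2 ^ (n - 1) : ℝ)⁻¹) ^ (((n : ℝ) + 1) / 2) * (b / (a + b)) *
      δ ^ (((n : ℝ) + 1) / 2) ≤ X / (v + a + b) ∧ 0 ≤ δ := by
  obtain ⟨t, ht⟩ : ∃ t, t = r₁ + r₂ - R := ⟨_, rfl⟩
  rw [← ht] at hX
  have hr1 : 0 < r₁ := by linarith
  have ht0 : 0 < t := by linarith
  have hR0 : 0 < R := by linarith
  have hv0 : 0 < v := by rw [hv]; positivity
  have ha0 : 0 < a := by rw [ha]; positivity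
  have hb0 : 0 < b := by rw [hb]; positivity
  have hn0 : (0 : ℝ) < n := by positivity
  set τ := t / (3 * r₂) with hτ
  have hτ0 : 0 < τ := by positivity
  set e : ℝ := ((n : ℝ) + 1) / 2 with he
  have he0 : 0 < e := by positivity
  have hW : t / 3 * √(r₂ * t / 3) ^ (n - 1) * w = b * τ ^ e := by
    have e1 : r₂ * t / 3 = r₂ ^ 2 * τ := by rw [hτ]; field_simp
    have e2 : t / 3 = r₂ * τ := by rw [hτ]; field_simp
    have e3 : τ ^ e = τ * √τ ^ (n - 1) := by
      rw [Real.sqrt_eq_rpow, ← Real.rpow_natCast, ← Real.rpow_mul hτ0.le]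
      nth_rewrite 2 [← Real.rpow_one τ]
      rw [← Real.rpow_add hτ0, he, Nat.cast_sub (by omega)]
      congr 1
      push_cast
      ring
    rw [e1, Real.sqrt_mul (by positivity), Real.sqrt_sq h2.le, mul_pow, e3, e2, hb]
    obtain ⟨m, rfl⟩ : ∃ m, n = m + 1 := ⟨n - 1, by omega⟩
    rw [Nat.add_sub_cancel]
    ring
  rw [hW] at hX
  have hL := lower_pow hn hr1 h2
  have hU := upper_pow (n := n) (L := r₁ + r₂) (t := t) (by linarith) (by linarith)
  rw [show r₁ + r₂ - t = R by rw [ht]; ring] at hU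
  have hden : r₁ ^ (n - 1) * r₂ * w ≤ S - (a + b) := by
    rw [hS, ha, hb]; nlinarith
  have hden0 : 0 < r₁ ^ (n - 1) * r₂ * w := by positivity
  have hnum : S - v ≤ n * (2 * r₁) ^ (n - 1) * t * w := by
    have : (r₁ + r₂) ^ (n - 1) ≤ (2 * r₁) ^ (n - 1) := by gcongr; linarith
    have h3 : n * (r₁ + r₂) ^ (n - 1) * t ≤ n * (2 * r₁) ^ (n - 1) * t := by gcongr
    rw [hS, hv]; nlinarith
  have hSv : 0 ≤ S - v := by
    have : R ^ n ≤ (r₁ + r₂) ^ n := by gcongr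
    rw [hS, hv]; nlinarith
  have hδ0 : 0 ≤ δ := by rw [hδ]; exact div_nonneg hSv (by linarith)
  have hK : (0 : ℝ) < 3 * n * 2 ^ (n - 1) := by positivity
  have hδτ : (3 * n * 2 ^ (n - 1) : ℝ)⁻¹ * δ ≤ τ := by
    rw [inv_mul_le_iff₀ hK, hδ]
    calc (S - v) / (S - (a + b)) ≤ (n * (2 * r₁) ^ (n - 1) * t * w) / (r₁ ^ (n - 1) * r₂ * w) := by
          gcongr
      _ = _ := by rw [hτ, mul_pow]; field_simp
  refine ⟨?_, hδ0⟩
  have hvab : v + a + b ≤ (2 ^ n + 1) * (a + b) := by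
    have h4 : R ^ n ≤ (2 * r₁) ^ n := by gcongr; linarith
    have h5 : v ≤ 2 ^ n * a := by
      rw [hv, ha, ← mul_assoc, ← mul_pow]; gcongr
    have : 0 ≤ (2 : ℝ) ^ n * b := by positivity
    nlinarith
  calc _ = b * ((3 * n * 2 ^ (n - 1) : ℝ)⁻¹ * δ) ^ e / ((2 ^ n + 1) * (a + b)) := by
        rw [Real.mul_rpow (by positivity) hδ0]; field_simp
    _ ≤ b * τ ^ e / ((2 ^ n + 1) * (a + b)) := by gcongr
    _ ≤ b * τ ^ e / (v + a + b) := by gcongr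
    _ ≤ _ := by gcongr

end DistObs

open DistObs

/-- Quantitative distortion obstruction for nested sets: for `n ≥ 2` there is a constant
`C_n > 0` such that for all `E, E₁, E₂ ⊆ ℝⁿ` of positive finite measure with
`E₁ ∪ E₂ ⊆ E`, `E₁ ∩ E₂ = ∅` and `|E₁| ≥ |E₂|`,
`(|E| D(E)^{n/(n−1)} + |E₁| D(E₁)^{n/(n−1)} + |E₂| D(E₂)^{n/(n−1)}) / (|E| + |E₁ ∪ E₂|)`
is at least
`C_n (|E₂|/(|E₁|+|E₂|))^{n/(n−1)}
  · [((|E₁|^{1/n}+|E₂|^{1/n})ⁿ − |E|)₊ / ((|E₁|^{1/n}+|E₂|^{1/n})ⁿ − |E₁ ∪ E₂|)]^{n(n+1)/(2(n−1))}`,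
where the numerator of the bracket is truncated at `0` (so that the estimate is trivial
when `|E| ≥ (|E₁|^{1/n}+|E₂|^{1/n})ⁿ`). -/
theorem distortion_obstruction {n : ℕ} (hn : 2 ≤ n) :
    ∃ C : ℝ, 0 < C ∧
      ∀ (E E₁ E₂ : Set (EuclideanSpace ℝ (Fin n))),
        MeasurableSet E → MeasurableSet E₁ → MeasurableSet E₂ →
        0 < volume E → volume E < ⊤ →
        0 < volume E₁ → volume E₁ < ⊤ →
        0 < volume E₂ → volume E₂ < ⊤ →
        E₁ ∪ E₂ ⊆ E → E₁ ∩ E₂ = ∅ → volume E₂ ≤ volume E₁ →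
        ((volume E).toReal * fraenkelAsymmetry E ^ ((n : ℝ) / ((n : ℝ) - 1)) +
            (volume E₁).toReal * fraenkelAsymmetry E₁ ^ ((n : ℝ) / ((n : ℝ) - 1)) +
            (volume E₂).toReal * fraenkelAsymmetry E₂ ^ ((n : ℝ) / ((n : ℝ) - 1))) /
          ((volume E).toReal + (volume (E₁ ∪ E₂)).toReal) ≥
        C * ((volume E₂).toReal / ((volume E₁).toReal + (volume E₂).toReal)) ^
            ((n : ℝ) / ((n : ℝ) - 1)) *
          (max 0 (((volume E₁).toReal ^ (1 / (n : ℝ)) +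
                (volume E₂).toReal ^ (1 / (n : ℝ))) ^ n - (volume E).toReal) /
            (((volume E₁).toReal ^ (1 / (n : ℝ)) +
                (volume E₂).toReal ^ (1 / (n : ℝ))) ^ n - (volume (E₁ ∪ E₂)).toReal)) ^
            (((n : ℝ) * ((n : ℝ) + 1)) / (2 * ((n : ℝ) - 1))) := by
  have hn' : (2 : ℝ) ≤ n := by exact_mod_cast hn
  refine ⟨(((2 : ℝ) ^ n + 1)⁻¹ * ((3 * n * 2 ^ (n - 1) : ℝ)⁻¹) ^ (((n : ℝ) + 1) / 2)) ^
    ((n : ℝ) / ((n : ℝ) - 1)), by positivity, ?_⟩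
  intro E E₁ E₂ mE mE₁ mE₂ hE0 hE hE₁0 hE₁ hE₂0 hE₂ hsub hdisj hle
  have hun : (volume (E₁ ∪ E₂)).toReal = (volume E₁).toReal + (volume E₂).toReal := by
    rw [measure_union (disjoint_iff_inter_eq_empty.2 hdisj) mE₂, ENNReal.toReal_add hE₁.ne hE₂.ne]
  have hp0 : 0 < (n : ℝ) - 1 := by linarith
  obtain ⟨R, hR0, hv, hR⟩ := pick hn E hE0 hE
  obtain ⟨r₁, hr₁0, ha, hr₁⟩ := pick hn E₁ hE₁0 hE₁
  obtain ⟨r₂, hr₂0, hb, hr₂⟩ := pick hn E₂ hE₂0 hE₂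
  have hw := om_pos n
  have hn0 : n ≠ 0 := by omega
  have h12 : r₂ ≤ r₁ := by
    have := ENNReal.toReal_mono hE₁.ne hle
    rw [ha, hb] at this
    exact (pow_le_pow_iff_left₀ hr₂0.le hr₁0.le hn0).1 (le_of_mul_le_mul_right this hw)
  have h1R : r₁ ≤ R := by
    have := ENNReal.toReal_mono hE.ne (measure_mono (subset_union_left.trans hsub) :
      volume E₁ ≤ volume E)
    rw [ha, hv] at this
    exact (pow_le_pow_iff_left₀ hr₁0.le hR0.le hn0).1 (le_of_mul_le_mul_right this hw)
  have hroot : ∀ r : ℝ, 0 < r → (r ^ n * om n) ^ (1 / (n : ℝ)) = r * om n ^ (1 / (n : ℝ)) := by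
    intro r hr
    rw [Real.mul_rpow (by positivity) hw.le, one_div, Real.pow_rpow_inv_natCast hr.le hn0]
  have hS : ((volume E₁).toReal ^ (1 / (n : ℝ)) + (volume E₂).toReal ^ (1 / (n : ℝ))) ^ n
      = (r₁ + r₂) ^ n * om n := by
    rw [ha, hb, hroot _ hr₁0, hroot _ hr₂0, ← add_mul, mul_pow, one_div,
      Real.rpow_inv_natCast_pow hw.le hn0]
  rw [hun, hS]
  have hD := asym_nonneg E
  have hD₁ := asym_nonneg E₁
  have hD₂ := asym_nonneg E₂
  by_cases hRr : R < r₁ + r₂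
  · have hX : (r₁ + r₂ - R) / 3 * √(r₂ * (r₁ + r₂ - R) / 3) ^ (n - 1) * om n ≤
        (volume E).toReal * fraenkelAsymmetry E + (volume E₁).toReal * fraenkelAsymmetry E₁ +
        (volume E₂).toReal * fraenkelAsymmetry E₂ := by
      refine le_of_forall_pos_le_add fun ε hε => ?_
      obtain ⟨x, -, hx⟩ := hR (ε / 3) (by positivity)
      obtain ⟨x₁, -, hx₁⟩ := hr₁ (ε / 3) (by positivity)
      obtain ⟨x₂, -, hx₂⟩ := hr₂ (ε / 3) (by positivity)
      have := three_balls hn E E₁ E₂ hE hE₁ hE₂ hsub hdisj x x₁ x₂ hr₂0 h12 h1R hRr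
      linarith
    obtain ⟨hm, hδ0⟩ := final_num hn hw hr₂0 h12 h1R hRr hv ha hb rfl rfl hX
    have hpos : 0 ≤ (r₁ + r₂) ^ n * om n - (volume E).toReal := by
      have : R ^ n ≤ (r₁ + r₂) ^ n := by gcongr
      rw [hv]; nlinarith
    rw [max_eq_right hpos]
    have hj := jensen3 (p := (n : ℝ) / ((n : ℝ) - 1)) (ENNReal.toReal_pos hE0.ne' hE.ne)
      (ENNReal.toReal_pos hE₁0.ne' hE₁.ne) (ENNReal.toReal_pos hE₂0.ne' hE₂.ne) hD hD₁ hD₂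
      (by rw [le_div_iff₀ hp0]; linarith)
    rw [← add_assoc]
    refine le_trans ?_ hj
    refine le_trans (le_of_eq ?_) (Real.rpow_le_rpow (by positivity) hm (by positivity))
    rw [show (n : ℝ) * ((n : ℝ) + 1) / (2 * ((n : ℝ) - 1)) =
        (((n : ℝ) + 1) / 2) * ((n : ℝ) / ((n : ℝ) - 1)) by
          have := hp0.ne'
          field_simp,
      Real.rpow_mul hδ0, ← Real.mul_rpow (by positivity) (by positivity),
      ← Real.mul_rpow (by positivity) (by positivity)]
  · have hneg : (r₁ + r₂) ^ n * om n - (volume E).toReal ≤ 0 := by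
      have : (r₁ + r₂) ^ n ≤ R ^ n := by
        have := not_lt.1 hRr
        gcongr
      rw [hv]; nlinarith
    rw [max_eq_left hneg, zero_div, Real.zero_rpow (by positivity), mul_zero]
    positivity
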